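/- For every complex number q with 0 < |q| < 1, one has ∑_{i,j,k,l ≥ 0} q^{2i²+2j²+2k²+2l²−2il−2jl−2kl+2i−2j+l} / ((q⁴;q⁴)_i (q⁴;q⁴)_j (q⁴;q⁴)_k (q⁴;q⁴)_l) = 2 J_8 J_{10,24} / J_2² + 2q · J_4³ J_{4,24} / (J_2³ J_8) − 2q² · J_8 J_{2,24} / J_2². (This is the paper's identity F(q, q^{−1}, 1, q^{1/2}; q²) = 2 J_4 J_{5,12}/J_1² + 2q^{1/2} J_2³ J_{2,12}/(J_1³ J_4) − 2q J_4 J_{1,12}/J_1², with q replaced by q² throughout to clear half-integer exponents.) -/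

import Mathlib

open scoped BigOperators

/-- The infinite q-Pochhammer symbol `(a; q)_∞ = ∏_{k=0}^∞ (1 - a q^k)`. -/
noncomputable def qPochInf (a q : ℂ) : ℂ := ∏' n : ℕ, (1 - a * q ^ n)

/-- The finite q-Pochhammer symbol `(a; q)_n = ∏_{k=0}^{n-1} (1 - a q^k)`. -/
noncomputable def qPoch (a q : ℂ) (n : ℕ) : ℂ :=
  Finset.prod (Finset.range n) (fun k => 1 - a * q ^ k)

/-- `J_m = (q^m; q^m)_∞`. -/
noncomputable def J (q : ℂ) (m : ℕ) : ℂ := qPochInf (q ^ m) (q ^ m)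

/-- `J_{a,m} = (q^a; q^m)_∞ (q^{m-a}; q^m)_∞ (q^m; q^m)_∞`. -/
noncomputable def Jam (q : ℂ) (a m : ℕ) : ℂ :=
  qPochInf (q ^ a) (q ^ m) * qPochInf (q ^ (m - a)) (q ^ m) * qPochInf (q ^ m) (q ^ m)

/-!
Summing over `j` and `k` by Euler's expansion gives `(-q^(-2l); q²)_∞`, a finite product times a
constant, which cancels half of `(q⁴; q⁴)_l`. The sum over `l` can then be evaluated in the same
way, and there remains the single series `∑ₖ q^(k² + 2k) (-q; q²)_k / (q⁴; q⁴)_k`. Bailey's lemma,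
which rests on Cauchy's `₁φ₁` summation, applied to one of Slater's Bailey pairs turns it into a
multiple of the theta series `∑ₙ (-1)ⁿ q^(3n² + 2n)`. The remaining infinite products contain
`∑ₙ q^(n²)`, and Schröter's formula splits the product of these two theta series into four terms,
one of which vanishes while the other three are those of the theorem.
-/

open Filter Topology Finset

section QPochhammer

variable {p : ℂ}

lemma norm_mul_pow_le (hp : ‖p‖ < 1) (a : ℂ) (n : ℕ) : ‖a * p ^ n‖ ≤ ‖a‖ := by
  rw [norm_mul, norm_pow]
  exact mul_le_of_le_one_right (norm_nonneg _) (pow_le_one₀ (norm_nonneg _) hp.le)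

lemma tendsto_mul_pow_zero (hp : ‖p‖ < 1) (a : ℂ) :
    Tendsto (fun n : ℕ => a * p ^ n) atTop (𝓝 0) := by
  simpa using (tendsto_pow_atTop_nhds_zero_of_norm_lt_one hp).const_mul a

lemma summable_norm_neg_mul_pow (hp : ‖p‖ < 1) (a : ℂ) :
    Summable fun n : ℕ => ‖-(a * p ^ n)‖ := by
  simp only [norm_neg, norm_mul, norm_pow]
  exact (summable_geometric_of_lt_one (norm_nonneg _) hp).mul_left _

@[simp]
lemma qPoch_zero (a p : ℂ) : qPoch a p 0 = 1 := by simp [qPoch]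

lemma qPoch_succ (a p : ℂ) (n : ℕ) : qPoch a p (n + 1) = qPoch a p n * (1 - a * p ^ n) := by
  simp [qPoch, prod_range_succ]

lemma qPoch_add (a p : ℂ) (m n : ℕ) :
    qPoch a p (m + n) = qPoch a p m * qPoch (a * p ^ m) p n := by
  simp [qPoch, prod_range_add, pow_add, mul_assoc]

lemma qPoch_succ' (a p : ℂ) (n : ℕ) : qPoch a p (n + 1) = (1 - a) * qPoch (a * p) p n := by
  simpa [qPoch_succ, add_comm] using qPoch_add a p 1 n

lemma tendsto_qPoch (hp : ‖p‖ < 1) (a : ℂ) :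
    Tendsto (qPoch a p) atTop (𝓝 (qPochInf a p)) := by
  have : Multipliable fun n : ℕ => 1 - a * p ^ n := by
    simpa [sub_eq_add_neg] using multipliable_one_add_of_summable (summable_norm_neg_mul_pow hp a)
  exact this.hasProd.tendsto_prod_nat

lemma one_sub_mul_pow_ne_zero (hp : ‖p‖ < 1) {a : ℂ} (ha : ‖a‖ < 1) (n : ℕ) :
    1 - a * p ^ n ≠ 0 := by
  intro h
  have := (norm_mul_pow_le hp a n).trans_lt ha
  simp [← sub_eq_zero.mp h] at this

lemma qPoch_ne_zero (hp : ‖p‖ < 1) {a : ℂ} (ha : ‖a‖ < 1) (n : ℕ) : qPoch a p n ≠ 0 :=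
  prod_ne_zero_iff.mpr fun k _ => one_sub_mul_pow_ne_zero hp ha k

lemma qPochInf_ne_zero (hp : ‖p‖ < 1) {a : ℂ} (ha : ‖a‖ < 1) : qPochInf a p ≠ 0 := by
  have := tprod_one_add_ne_zero_of_summable (f := fun n : ℕ => -(a * p ^ n))
    (fun n => by simpa [← sub_eq_add_neg] using one_sub_mul_pow_ne_zero hp ha n)
    (summable_norm_neg_mul_pow hp a)
  simpa [qPochInf, sub_eq_add_neg] using this

lemma qPochInf_eq_zero {a : ℂ} (n : ℕ) (h : a * p ^ n = 1) : qPochInf a p = 0 :=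
  tprod_of_exists_eq_zero ⟨n, by simp [h]⟩

@[simp]
lemma qPochInf_zero_left (p : ℂ) : qPochInf 0 p = 1 := by simp [qPochInf]

lemma qPochInf_eq_qPoch_mul (hp : ‖p‖ < 1) (a : ℂ) (n : ℕ) :
    qPochInf a p = qPoch a p n * qPochInf (a * p ^ n) p := by
  have h := (tendsto_qPoch hp a).comp (tendsto_add_atTop_nat n)
  refine tendsto_nhds_unique h (((tendsto_qPoch hp _).const_mul _).congr fun m => ?_)
  rw [← qPoch_add, Function.comp_apply, add_comm]

lemma qPochInf_eq_one_sub_mul (hp : ‖p‖ < 1) (a : ℂ) :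
    qPochInf a p = (1 - a) * qPochInf (a * p) p := by
  simpa [qPoch] using qPochInf_eq_qPoch_mul hp a 1

lemma norm_qPoch_sub_one_le (hp : ‖p‖ < 1) (a : ℂ) (n : ℕ) :
    ‖qPoch a p n - 1‖ ≤ Real.exp (‖a‖ / (1 - ‖p‖)) - 1 := by
  have h_prod := norm_prod_one_add_sub_one_le (range n) fun k => -(a * p ^ k)
  have h_geom : ∑ k ∈ range n, ‖-(a * p ^ k)‖ ≤ ‖a‖ / (1 - ‖p‖) := by
    refine ((summable_norm_neg_mul_pow hp a).sum_le_tsum _ fun _ _ => norm_nonneg _).trans_eq ?_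
    simp only [norm_neg, norm_mul, norm_pow]
    rw [tsum_mul_left, tsum_geometric_of_lt_one (norm_nonneg _) hp, div_eq_mul_inv]
  simp only [← sub_eq_add_neg] at h_prod
  exact h_prod.trans (sub_le_sub_right (Real.exp_le_exp.mpr h_geom) _)

lemma norm_qPochInf_sub_one_le (hp : ‖p‖ < 1) (a : ℂ) :
    ‖qPochInf a p - 1‖ ≤ Real.exp (‖a‖ / (1 - ‖p‖)) - 1 :=
  le_of_tendsto ((tendsto_qPoch hp a).sub_const 1).norm
    (Eventually.of_forall (norm_qPoch_sub_one_le hp a))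

lemma norm_qPochInf_le (hp : ‖p‖ < 1) (a : ℂ) :
    ‖qPochInf a p‖ ≤ Real.exp (‖a‖ / (1 - ‖p‖)) := by
  have h := norm_le_norm_sub_add (qPochInf a p) 1
  rw [norm_one] at h
  linarith [norm_qPochInf_sub_one_le hp a]

lemma tendsto_qPochInf_one (hp : ‖p‖ < 1) {ι : Type*} {l : Filter ι} {u : ι → ℂ}
    (hu : Tendsto u l (𝓝 0)) : Tendsto (fun i => qPochInf (u i) p) l (𝓝 1) := by
  have h_bound : Tendsto (fun i => Real.exp (‖u i‖ / (1 - ‖p‖)) - 1) l (𝓝 0) := by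
    simpa using ((hu.norm.div_const (1 - ‖p‖)).rexp).sub_const 1
  rw [tendsto_iff_norm_sub_tendsto_zero]
  exact squeeze_zero (fun _ => norm_nonneg _) (fun i => norm_qPochInf_sub_one_le hp (u i)) h_bound

lemma exists_norm_qPoch_inv_le (hp : ‖p‖ < 1) {a : ℂ} (ha : qPochInf a p ≠ 0) :
    ∃ C, ∀ n, ‖(qPoch a p n)⁻¹‖ ≤ C :=
  ((tendsto_qPoch hp a).inv₀ ha).norm.bddAbove_range.imp fun _ hC n => hC ⟨n, rfl⟩

lemma qPoch_two_mul (a p : ℂ) (n : ℕ) :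
    qPoch a p (2 * n) = qPoch a (p ^ 2) n * qPoch (a * p) (p ^ 2) n := by
  induction n with
  | zero => simp
  | succ n ih =>
    rw [Nat.mul_succ, qPoch_succ, qPoch_succ, qPoch_succ, qPoch_succ, ih]
    ring

lemma qPoch_sq_sq (a p : ℂ) (n : ℕ) :
    qPoch (a ^ 2) (p ^ 2) n = qPoch a p n * qPoch (-a) p n := by
  rw [qPoch, qPoch, qPoch, ← prod_mul_distrib]
  exact prod_congr rfl fun k _ => by ring

lemma norm_pow_lt_one (hp : ‖p‖ < 1) {n : ℕ} (hn : n ≠ 0) : ‖p ^ n‖ < 1 := by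
  rw [norm_pow]
  exact pow_lt_one₀ (norm_nonneg _) hp hn

lemma qPochInf_eq_mul_sq_base (hp : ‖p‖ < 1) (a : ℂ) :
    qPochInf a p = qPochInf a (p ^ 2) * qPochInf (a * p) (p ^ 2) := by
  have hp2 := norm_pow_lt_one hp two_ne_zero
  have h := (tendsto_qPoch hp2 a).mul (tendsto_qPoch hp2 (a * p))
  simp only [← qPoch_two_mul] at h
  exact tendsto_nhds_unique
    ((tendsto_qPoch hp a).comp (tendsto_id.const_mul_atTop' two_pos)) h

lemma qPochInf_sq_sq (hp : ‖p‖ < 1) (a : ℂ) :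
    qPochInf (a ^ 2) (p ^ 2) = qPochInf a p * qPochInf (-a) p := by
  have h := (tendsto_qPoch hp a).mul (tendsto_qPoch hp (-a))
  simp only [← qPoch_sq_sq] at h
  exact tendsto_nhds_unique (tendsto_qPoch (norm_pow_lt_one hp two_ne_zero) (a ^ 2)) h

end QPochhammer

lemma qPochInf_div_pow {p c : ℂ} (hp : ‖p‖ < 1) (hp0 : p ≠ 0) (hc : c ≠ 0) (n : ℕ) :
    qPochInf (c / p ^ n) p =
      (-c) ^ n / p ^ (n + 1).choose 2 * qPoch (p / c) p n * qPochInf c p := by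
  induction n with
  | zero => simp
  | succ n ih =>
    have h_shift : c / p ^ (n + 1) * p = c / p ^ n := by rw [pow_succ]; field_simp
    have h_choose : (n + 1 + 1).choose 2 = n + 1 + (n + 1).choose 2 := by
      rw [Nat.choose_succ_succ' (n + 1) 1, Nat.choose_one_right]
    rw [qPochInf_eq_one_sub_mul hp, h_shift, ih, qPoch_succ, h_choose, pow_add, pow_add (-c),
      pow_succ p]
    field_simp
    ring

lemma choose_two_add (m n : ℕ) : (m + n).choose 2 = m.choose 2 + n.choose 2 + m * n := by
  induction n with
  | zero => simp
  | succ n ih =>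
    rw [← add_assoc, Nat.choose_succ_succ' (m + n) 1, Nat.choose_succ_succ' n 1, ih]
    simp only [Nat.choose_one_right]
    ring

section PhiOneOne

variable {p : ℂ}

lemma summable_pow_choose_two_mul_pow {r : ℝ} (hr0 : 0 ≤ r) (hr1 : r < 1) (x : ℝ) :
    Summable fun n : ℕ => r ^ n.choose 2 * x ^ n := by
  have h_ratio : ∀ᶠ n : ℕ in atTop, |x| * r ^ n ≤ 1 / 2 := by
    have := (tendsto_pow_atTop_nhds_zero_of_lt_one hr0 hr1).const_mul |x|
    rw [mul_zero] at this
    exact this.eventually_le_const (by norm_num)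
  refine summable_of_ratio_norm_eventually_le (r := 1 / 2) (by norm_num) ?_
  filter_upwards [h_ratio] with n hn
  calc ‖r ^ (n + 1).choose 2 * x ^ (n + 1)‖
      = |x| * r ^ n * ‖r ^ n.choose 2 * x ^ n‖ := by
        simp only [Nat.choose_succ_succ' n 1, Nat.choose_one_right, norm_mul, norm_pow,
          Real.norm_eq_abs, abs_of_nonneg hr0]
        ring
    _ ≤ 1 / 2 * ‖r ^ n.choose 2 * x ^ n‖ := by gcongr

/-- The `j`-th term of the `₁φ₁(c / b; c; p, b)` series, multiplied by `(c; p)_∞`. The numerator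
`(c / b; p)_j (-b)^j` is written as a product that also makes sense at `b = 0`. -/
noncomputable def phiOneOneTerm (p b c : ℂ) (j : ℕ) : ℂ :=
  p ^ j.choose 2 * (∏ k ∈ range j, (c * p ^ k - b)) * qPochInf (c * p ^ j) p / qPoch p p j

lemma exists_norm_phiOneOneTerm_le (hp : ‖p‖ < 1) (B C : ℝ) :
    ∃ M, ∀ b c : ℂ, ‖b‖ ≤ B → ‖c‖ ≤ C → ∀ j,
      ‖phiOneOneTerm p b c j‖ ≤ M * (‖p‖ ^ j.choose 2 * (C + B) ^ j) := by
  obtain ⟨K, hK⟩ := exists_norm_qPoch_inv_le hp (qPochInf_ne_zero hp hp)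
  refine ⟨Real.exp (C / (1 - ‖p‖)) * K, fun b c hb hc j => ?_⟩
  have : 0 < 1 - ‖p‖ := sub_pos.mpr hp
  have hcp (k : ℕ) : ‖c * p ^ k‖ ≤ C := (norm_mul_pow_le hp c k).trans hc
  have h_prod : ‖∏ k ∈ range j, (c * p ^ k - b)‖ ≤ (C + B) ^ j := by
    rw [norm_prod]
    refine (prod_le_prod (fun _ _ => norm_nonneg _) fun k _ =>
      (norm_sub_le _ b).trans (add_le_add (hcp k) hb)).trans_eq ?_
    rw [prod_const, card_range]
  have h_inf : ‖qPochInf (c * p ^ j) p‖ ≤ Real.exp (C / (1 - ‖p‖)) :=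
    (norm_qPochInf_le hp _).trans (Real.exp_le_exp.mpr (by gcongr; exact hcp j))
  have h_CB : 0 ≤ C + B :=
    add_nonneg ((norm_nonneg _).trans hc) ((norm_nonneg _).trans hb)
  calc ‖phiOneOneTerm p b c j‖
      = ‖p‖ ^ j.choose 2 * ‖∏ k ∈ range j, (c * p ^ k - b)‖ * ‖qPochInf (c * p ^ j) p‖ *
          ‖(qPoch p p j)⁻¹‖ := by
        simp only [phiOneOneTerm, div_eq_mul_inv, norm_mul, norm_pow]
    _ ≤ ‖p‖ ^ j.choose 2 * (C + B) ^ j * Real.exp (C / (1 - ‖p‖)) * K := by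
        gcongr
        exact hK j
    _ = Real.exp (C / (1 - ‖p‖)) * K * (‖p‖ ^ j.choose 2 * (C + B) ^ j) := by ring

lemma summable_phiOneOneTerm (hp : ‖p‖ < 1) (b c : ℂ) : Summable (phiOneOneTerm p b c) := by
  obtain ⟨M, hM⟩ := exists_norm_phiOneOneTerm_le hp ‖b‖ ‖c‖
  exact .of_norm_bounded
    ((summable_pow_choose_two_mul_pow (norm_nonneg p) hp (‖c‖ + ‖b‖)).mul_left M)
    (hM b c le_rfl le_rfl)

lemma one_sub_pow_succ_mul_phiOneOneTerm_succ (hp : ‖p‖ < 1) (b c : ℂ) (j : ℕ) :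
    (1 - p ^ (j + 1)) * phiOneOneTerm p b c (j + 1) =
      p ^ j * (c * p ^ j - b) * (p ^ j.choose 2 * (∏ k ∈ range j, (c * p ^ k - b)) *
        qPochInf (c * p ^ (j + 1)) p / qPoch p p j) := by
  have h_one_sub : 1 - p ^ (j + 1) ≠ 0 := by
    simpa only [pow_succ'] using one_sub_mul_pow_ne_zero hp hp j
  have h_den := qPoch_ne_zero hp hp j
  rw [phiOneOneTerm, Nat.choose_succ_succ' j 1, Nat.choose_one_right, pow_add, prod_range_succ,
    qPoch_succ, ← pow_succ', mul_div_assoc', mul_div_assoc', div_eq_div_iff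
      (mul_ne_zero h_den h_one_sub) h_den]
  ring

lemma phiOneOneTerm_sub_one_sub_mul (hp : ‖p‖ < 1) (b c : ℂ) (j : ℕ) :
    phiOneOneTerm p b c j - (1 - b) * phiOneOneTerm p (b * p) (c * p) j =
      (1 - p ^ j) * phiOneOneTerm p b c j
        - (1 - p ^ (j + 1)) * phiOneOneTerm p b c (j + 1) := by
  have h_prod : ∏ k ∈ range j, (c * p * p ^ k - b * p) =
      p ^ j * ∏ k ∈ range j, (c * p ^ k - b) := by
    rw [← card_range j, ← prod_const, card_range, ← prod_mul_distrib]
    exact prod_congr rfl fun k _ => by ring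
  rw [one_sub_pow_succ_mul_phiOneOneTerm_succ hp, phiOneOneTerm, phiOneOneTerm, h_prod,
    qPochInf_eq_one_sub_mul hp (c * p ^ j), mul_assoc c (p ^ j) p, ← pow_succ, mul_assoc c p,
    ← pow_succ']
  ring

lemma tsum_phiOneOneTerm_eq_one_sub_mul (hp : ‖p‖ < 1) (b c : ℂ) :
    ∑' j, phiOneOneTerm p b c j = (1 - b) * ∑' j, phiOneOneTerm p (b * p) (c * p) j := by
  have hs := summable_phiOneOneTerm hp b c
  have h_diff := (hs.hasSum.sub
    ((summable_phiOneOneTerm hp (b * p) (c * p)).hasSum.mul_left (1 - b))).tendsto_sum_nat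
  simp only [phiOneOneTerm_sub_one_sub_mul hp,
    sum_range_sub' fun j => (1 - p ^ j) * phiOneOneTerm p b c j] at h_diff
  have h_zero : Tendsto (fun n => (1 - p ^ 0) * phiOneOneTerm p b c 0
      - (1 - p ^ n) * phiOneOneTerm p b c n) atTop (𝓝 0) := by
    simpa using (((tendsto_pow_atTop_nhds_zero_of_norm_lt_one hp).const_sub 1).mul
      hs.tendsto_atTop_zero).neg
  exact sub_eq_zero.mp (tendsto_nhds_unique h_diff h_zero)

lemma tsum_phiOneOneTerm_eq_qPoch_mul (hp : ‖p‖ < 1) (b c : ℂ) (n : ℕ) :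
    ∑' j, phiOneOneTerm p b c j =
      qPoch b p n * ∑' j, phiOneOneTerm p (b * p ^ n) (c * p ^ n) j := by
  induction n with
  | zero => simp
  | succ n ih =>
    rw [ih, tsum_phiOneOneTerm_eq_one_sub_mul hp, qPoch_succ, pow_succ]
    simp only [mul_assoc]

lemma tendsto_tsum_phiOneOneTerm_mul_pow (hp : ‖p‖ < 1) (b c : ℂ) :
    Tendsto (fun n : ℕ => ∑' j, phiOneOneTerm p (b * p ^ n) (c * p ^ n) j) atTop (𝓝 1) := by
  obtain ⟨M, hM⟩ := exists_norm_phiOneOneTerm_le hp ‖b‖ ‖c‖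
  rw [← tsum_ite_eq (0 : ℕ) fun _ => (1 : ℂ)]
  refine tendsto_tsum_of_dominated_convergence
    ((summable_pow_choose_two_mul_pow (norm_nonneg p) hp (‖c‖ + ‖b‖)).mul_left M) (fun j => ?_)
    (Eventually.of_forall fun n => hM _ _ (norm_mul_pow_le hp b n) (norm_mul_pow_le hp c n))
  have hb := tendsto_mul_pow_zero hp b
  have hcp (k : ℕ) : Tendsto (fun n : ℕ => c * p ^ n * p ^ k) atTop (𝓝 0) := by
    simpa using (tendsto_mul_pow_zero hp c).mul_const (p ^ k)
  have h_prod := tendsto_finsetProd (range j) fun k _ => (hcp k).sub hb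
  convert ((h_prod.const_mul (p ^ j.choose 2)).mul
    (tendsto_qPochInf_one hp (hcp j))).div_const (qPoch p p j) using 2
  · rfl
  · cases j <;> simp

theorem hasSum_phiOneOneTerm (hp : ‖p‖ < 1) (b c : ℂ) :
    HasSum (phiOneOneTerm p b c) (qPochInf b p) := by
  have h_lim := (tendsto_qPoch hp b).mul (tendsto_tsum_phiOneOneTerm_mul_pow hp b c)
  simp only [← tsum_phiOneOneTerm_eq_qPoch_mul hp, mul_one] at h_lim
  rw [← tendsto_nhds_unique tendsto_const_nhds h_lim]
  exact (summable_phiOneOneTerm hp b c).hasSum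

/-- The `n`-th term of Euler's expansion of `(-z; p)_∞`. -/
noncomputable def eulerTerm (p z : ℂ) (n : ℕ) : ℂ := p ^ n.choose 2 * z ^ n / qPoch p p n

theorem hasSum_eulerTerm (hp : ‖p‖ < 1) (z : ℂ) :
    HasSum (eulerTerm p z) (qPochInf (-z) p) := by
  have h_term : eulerTerm p z = phiOneOneTerm p (-z) 0 := by
    ext n
    simp [eulerTerm, phiOneOneTerm]
  rw [h_term]
  exact hasSum_phiOneOneTerm hp (-z) 0

end PhiOneOne

section JacobiTripleProduct

lemma hasSum_mul_prod {ι κ : Type*} {f : ι → ℂ} {g : κ → ℂ} {s t : ℂ} (hf : HasSum f s)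
    (hg : HasSum g t) : HasSum (fun x : ι × κ => f x.1 * g x.2) (s * t) :=
  hf.mul hg (summable_mul_of_summable_norm hf.summable.norm hg.summable.norm)

lemma pow_sq_eq_pow_choose_two (w : ℂ) (n : ℕ) : w ^ n ^ 2 = (w ^ 2) ^ n.choose 2 * w ^ n := by
  rw [← pow_mul, ← pow_add, Nat.choose_two_right, Nat.mul_div_cancel' n.even_mul_pred_self.two_dvd]
  congr 1
  cases n
  · rfl
  · simp only [Nat.add_sub_cancel]; ring

lemma prod_mul_pow_range (c p : ℂ) (j : ℕ) :
    ∏ k ∈ range j, c * p ^ k = c ^ j * p ^ j.choose 2 := by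
  rw [prod_mul_distrib, prod_const, card_range, prod_pow_eq_pow_sum, sum_range_id,
    Nat.choose_two_right]

variable {q z : ℂ}

lemma jacobi_term_eq (hq : ‖q‖ < 1) (hq0 : q ≠ 0) (hz : z ≠ 0) (i j : ℕ) :
    q ^ ((i : ℤ) - j) ^ 2 * z ^ ((i : ℤ) - j) / qPochInf (q ^ 2) (q ^ 2) *
        phiOneOneTerm (q ^ 2) 0 (q ^ (2 * ((i : ℤ) - j) + 2)) j =
      eulerTerm (q ^ 2) (z * q) i * eulerTerm (q ^ 2) (q / z) j := by
  have hp := norm_pow_lt_one hq two_ne_zero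
  have h_inf : qPochInf (q ^ 2 * (q ^ 2) ^ i) (q ^ 2) ≠ 0 :=
    right_ne_zero_of_mul (qPochInf_eq_qPoch_mul hp (q ^ 2) i ▸ qPochInf_ne_zero hp hp)
  have h_arg : q ^ (2 * ((i : ℤ) - j) + 2) * (q ^ 2) ^ j = q ^ 2 * (q ^ 2) ^ i := by
    simp only [← zpow_natCast, ← zpow_mul, ← zpow_add₀ hq0]
    congr 1
    push_cast
    ring
  have h_sq : q ^ ((i : ℤ) - j) ^ 2 * q ^ (2 * ((i : ℤ) - j) * j) * (q ^ j ^ 2 * q ^ j ^ 2) =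
      q ^ i ^ 2 * q ^ j ^ 2 := by
    simp only [← zpow_natCast, ← zpow_add₀ hq0]
    congr 1
    push_cast
    ring
  simp only [phiOneOneTerm, eulerTerm, sub_zero, prod_mul_pow_range, h_arg]
  rw [pow_sq_eq_pow_choose_two, pow_sq_eq_pow_choose_two, zpow_mul, zpow_natCast] at h_sq
  rw [qPochInf_eq_qPoch_mul hp (q ^ 2) i, zpow_sub₀ hz, zpow_natCast, zpow_natCast,
    zpow_add₀ hq0, zpow_ofNat]
  calc _ = q ^ ((i : ℤ) - j) ^ 2 * (q ^ (2 * ((i : ℤ) - j))) ^ j *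
          ((q ^ 2) ^ j.choose 2 * q ^ j * ((q ^ 2) ^ j.choose 2 * q ^ j)) * (z ^ i / z ^ j) /
          (qPoch (q ^ 2) (q ^ 2) i * qPoch (q ^ 2) (q ^ 2) j) := by
        field_simp
        ring
    _ = _ := by
        rw [h_sq]
        ring

theorem hasSum_jacobi (hq : ‖q‖ < 1) (hq0 : q ≠ 0) (hz : z ≠ 0) :
    HasSum (fun n : ℤ => q ^ n ^ 2 * z ^ n)
      (qPochInf (-(z * q)) (q ^ 2) * qPochInf (-(q / z)) (q ^ 2) * qPochInf (q ^ 2) (q ^ 2)) := by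
  have hp := norm_pow_lt_one hq two_ne_zero
  have h_inf := qPochInf_ne_zero hp hp
  let g : ℤ × ℕ → ℂ := fun x => q ^ x.1 ^ 2 * z ^ x.1 / qPochInf (q ^ 2) (q ^ 2) *
    phiOneOneTerm (q ^ 2) 0 (q ^ (2 * x.1 + 2)) x.2
  have h_inj : Function.Injective fun x : ℕ × ℕ => ((x.1 : ℤ) - x.2, x.2) := by
    rintro ⟨i, j⟩ ⟨i', j'⟩ h
    simp only [Prod.mk.injEq] at h ⊢
    lia
  have h_support : ∀ x ∉ Set.range fun x : ℕ × ℕ => ((x.1 : ℤ) - x.2, x.2), g x = 0 := by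
    rintro ⟨n, j⟩ hx
    have h_neg : n + j < 0 := by
      by_contra! h
      exact hx ⟨((n + j).toNat, j), by simp [Int.toNat_of_nonneg h]⟩
    have h_zero : qPochInf (q ^ (2 * n + 2) * (q ^ 2) ^ j) (q ^ 2) = 0 := by
      refine qPochInf_eq_zero (-(n + j + 1)).toNat ?_
      rw [← pow_mul, ← pow_mul, ← zpow_natCast, ← zpow_natCast, ← zpow_add₀ hq0, ← zpow_add₀ hq0]
      convert zpow_zero q
      push_cast
      rw [Int.toNat_of_nonneg (by lia)]
      ring
    simp [g, phiOneOneTerm, h_zero]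
  have h_double : HasSum g (qPochInf (-(z * q)) (q ^ 2) * qPochInf (-(q / z)) (q ^ 2)) := by
    rw [← h_inj.hasSum_iff h_support]
    convert hasSum_mul_prod (hasSum_eulerTerm hp (z * q)) (hasSum_eulerTerm hp (q / z))
      using 2 with x
    exact jacobi_term_eq hq hq0 hz x.1 x.2
  have h_fiber (n : ℤ) : HasSum (fun j => g (n, j))
      (q ^ n ^ 2 * z ^ n / qPochInf (q ^ 2) (q ^ 2)) := by
    simpa using (hasSum_phiOneOneTerm hp 0 (q ^ (2 * n + 2))).mul_left
      (q ^ n ^ 2 * z ^ n / qPochInf (q ^ 2) (q ^ 2))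
  have h_sum := (h_double.prod_fiberwise h_fiber).mul_right (qPochInf (q ^ 2) (q ^ 2))
  simp only [div_mul_cancel₀ _ h_inf] at h_sum
  exact h_sum

end JacobiTripleProduct

section ThetaSeries

/-- The theta series `∑ₙ qⁿ² zⁿ`, the sum ranging over all integers. -/
noncomputable def thetaSeries (q z : ℂ) : ℂ := ∑' n : ℤ, q ^ n ^ 2 * z ^ n

variable {q z : ℂ}

lemma hasSum_thetaSeries (hq : ‖q‖ < 1) (hq0 : q ≠ 0) (hz : z ≠ 0) :
    HasSum (fun n : ℤ => q ^ n ^ 2 * z ^ n) (thetaSeries q z) :=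
  (hasSum_jacobi hq hq0 hz).summable.hasSum

lemma thetaSeries_eq_qPochInf_mul (hq : ‖q‖ < 1) (hq0 : q ≠ 0) (hz : z ≠ 0) :
    thetaSeries q z =
      qPochInf (-(z * q)) (q ^ 2) * qPochInf (-(q / z)) (q ^ 2) * qPochInf (q ^ 2) (q ^ 2) :=
  (hasSum_jacobi hq hq0 hz).tsum_eq

lemma thetaSeries_pow_neg_pow (hq : ‖q‖ < 1) (hq0 : q ≠ 0) {a b : ℕ} (ha : a ≠ 0) (hab : b ≤ a) :
    thetaSeries (q ^ a) (-q ^ b) = Jam q (a - b) (2 * a) := by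
  have h_sub : 2 * a - (a - b) = b + a := by lia
  have h_div : q ^ a / q ^ b = q ^ (a - b) := (pow_sub₀ q hq0 hab).symm
  rw [thetaSeries_eq_qPochInf_mul (norm_pow_lt_one hq ha) (pow_ne_zero a hq0)
    (neg_ne_zero.mpr (pow_ne_zero b hq0)), Jam, h_sub, div_neg, h_div, neg_neg, neg_mul, neg_neg,
    ← pow_add, ← pow_mul, mul_comm a 2, mul_comm (qPochInf (q ^ (b + a)) _)]

lemma thetaSeries_inv (q z : ℂ) : thetaSeries q z⁻¹ = thetaSeries q z := by
  rw [thetaSeries, thetaSeries, ← (Equiv.neg ℤ).tsum_eq]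
  simp only [Equiv.neg_apply, neg_sq, inv_zpow', neg_neg]

lemma thetaSeries_sq_div (hq0 : q ≠ 0) (hz : z ≠ 0) :
    thetaSeries q (q ^ 2 / z) = z / q * thetaSeries q z := by
  rw [← thetaSeries_inv q z, thetaSeries, thetaSeries, ← tsum_mul_left,
    ← (Equiv.addRight (1 : ℤ)).tsum_eq fun n => z / q * (q ^ n ^ 2 * z⁻¹ ^ n)]
  refine tsum_congr fun n => ?_
  have h_sq : (n + 1) ^ 2 = n ^ 2 + 2 * n + 1 := by ring
  rw [Equiv.coe_addRight, h_sq, zpow_add_one₀ (inv_ne_zero hz), zpow_add_one₀ hq0, zpow_add₀ hq0,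
    div_zpow, inv_zpow, ← zpow_natCast q 2, ← zpow_mul, Nat.cast_ofNat]
  field_simp

lemma pow_mul_thetaSeries_neg_pow (hq0 : q ≠ 0) {a b c : ℕ} (h : b + c = 2 * a) :
    q ^ a * thetaSeries (q ^ a) (-q ^ b) = -q ^ c * thetaSeries (q ^ a) (-q ^ c) := by
  have hc : -q ^ c ≠ 0 := neg_ne_zero.mpr (pow_ne_zero c hq0)
  have h_arg : -q ^ b = (q ^ a) ^ 2 / -q ^ c := by
    rw [eq_div_iff hc, neg_mul_neg, ← pow_add, h, mul_comm, pow_mul]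
  rw [h_arg, thetaSeries_sq_div (pow_ne_zero a hq0) hc, ← mul_assoc,
    mul_div_cancel₀ _ (pow_ne_zero a hq0)]

lemma thetaSeries_neg_self (hq0 : q ≠ 0) : thetaSeries q (-q) = 0 := by
  have h := thetaSeries_sq_div hq0 (neg_ne_zero.mpr hq0)
  rw [div_neg, pow_two, mul_div_cancel_right₀ q hq0, neg_div, div_self hq0] at h
  exact self_eq_neg.mp (by simpa using h)

/-- The change of variables `m = x + b y + r`, `n = x - a y` with `0 ≤ r < a + b`, which
diagonalizes `a m² + b n²` up to linear terms. -/
def schroterEquiv (a b : ℕ) [NeZero (a + b)] : Fin (a + b) × ℤ × ℤ ≃ ℤ × ℤ where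
  toFun t := (t.2.1 + b * t.2.2 + t.1, t.2.1 - a * t.2.2)
  invFun s :=
    ((Int.divModEquiv (a + b) (s.1 - s.2)).2,
      s.2 + a * (Int.divModEquiv (a + b) (s.1 - s.2)).1,
      (Int.divModEquiv (a + b) (s.1 - s.2)).1)
  left_inv := by
    rintro ⟨r, x, y⟩
    have h : x + b * y + r - (x - a * y) = (Int.divModEquiv (a + b)).symm (y, r) := by
      simp [Int.divModEquiv]
      ring
    simp only [h, Equiv.apply_symm_apply, sub_add_cancel]
  right_inv := by
    rintro ⟨m, n⟩
    have h : (Int.divModEquiv (a + b)).symm (Int.divModEquiv (a + b) (m - n)) = m - n :=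
      Equiv.symm_apply_apply _ _
    dsimp only
    generalize Int.divModEquiv (a + b) (m - n) = d at h ⊢
    have h_eq : d.1 * (a + b : ℕ) + d.2 = m - n := h
    push_cast at h_eq
    ext
    · linear_combination h_eq
    · ring

lemma schroter_term_eq (hq0 : q ≠ 0) {u v : ℂ} (hu : u ≠ 0) (hv : v ≠ 0) (a b r : ℕ) (x y : ℤ) :
    (q ^ a) ^ (x + b * y + r) ^ 2 * u ^ (x + b * y + r) *
        ((q ^ b) ^ (x - a * y) ^ 2 * v ^ (x - a * y)) =
      q ^ (a * r ^ 2) * u ^ r *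
        ((q ^ (a + b)) ^ x ^ 2 * (u * v * q ^ (2 * a * r)) ^ x *
          ((q ^ (a * b * (a + b))) ^ y ^ 2 * (u ^ b / v ^ a * q ^ (2 * a * b * r)) ^ y)) := by
  have h_q : (q ^ a) ^ (x + b * y + r) ^ 2 * (q ^ b) ^ (x - a * y) ^ 2 =
      q ^ (a * r ^ 2) * (q ^ (a + b)) ^ x ^ 2 * (q ^ (2 * a * r)) ^ x *
        (q ^ (a * b * (a + b))) ^ y ^ 2 * (q ^ (2 * a * b * r)) ^ y := by
    simp only [← zpow_natCast q, ← zpow_mul, ← zpow_add₀ hq0]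
    congr 1
    push_cast
    ring
  have h_u : u ^ (x + b * y + r) = u ^ x * (u ^ b) ^ y * u ^ r := by
    rw [zpow_add₀ hu, zpow_add₀ hu, zpow_mul, zpow_natCast, zpow_natCast]
  have h_v : v ^ (x - a * y) = v ^ x / (v ^ a) ^ y := by
    rw [zpow_sub₀ hv, zpow_mul, zpow_natCast]
  simp only [mul_zpow, div_zpow, h_u, h_v]
  linear_combination (u ^ x * (u ^ b) ^ y * u ^ r * (v ^ x / (v ^ a) ^ y)) * h_q

theorem thetaSeries_mul_thetaSeries (hq : ‖q‖ < 1) (hq0 : q ≠ 0) {a b : ℕ} (ha : a ≠ 0)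
    (hb : b ≠ 0) {u v : ℂ} (hu : u ≠ 0) (hv : v ≠ 0) :
    thetaSeries (q ^ a) u * thetaSeries (q ^ b) v =
      ∑ r ∈ range (a + b), q ^ (a * r ^ 2) * u ^ r *
        (thetaSeries (q ^ (a + b)) (u * v * q ^ (2 * a * r)) *
          thetaSeries (q ^ (a * b * (a + b))) (u ^ b / v ^ a * q ^ (2 * a * b * r))) := by
  have hab : a + b ≠ 0 := by lia
  have : NeZero (a + b) := ⟨hab⟩
  have hθ {k : ℕ} (hk : k ≠ 0) {z : ℂ} (hz : z ≠ 0) :=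
    hasSum_thetaSeries (norm_pow_lt_one hq hk) (pow_ne_zero k hq0) hz
  have h_prod := (schroterEquiv a b).hasSum_iff.mpr (hasSum_mul_prod (hθ ha hu) (hθ hb hv))
  rw [← Fin.sum_univ_eq_sum_range (fun r : ℕ => _) (a + b)]
  refine (h_prod.prod_fiberwise fun r => ?_).unique (hasSum_fintype _)
  have h_fiber := (hasSum_mul_prod
    (hθ hab (mul_ne_zero (mul_ne_zero hu hv) (pow_ne_zero (2 * a * r) hq0)))
    (hθ (mul_ne_zero (mul_ne_zero ha hb) hab)
      (mul_ne_zero (div_ne_zero (pow_ne_zero b hu) (pow_ne_zero a hv))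
        (pow_ne_zero (2 * a * b * r) hq0)))).mul_left (q ^ (a * (r : ℕ) ^ 2) * u ^ (r : ℕ))
  simp only [← schroter_term_eq hq0 hu hv] at h_fiber
  exact h_fiber

lemma thetaSeries_one_mul_thetaSeries_cube_eq_sum (hq : ‖q‖ < 1) (hq0 : q ≠ 0) :
    thetaSeries q 1 * thetaSeries (q ^ 3) (-q ^ 2) =
      thetaSeries (q ^ 4) (-q ^ 2) * thetaSeries (q ^ 12) (-q ^ 2)⁻¹
        + q * (thetaSeries (q ^ 4) (-q ^ 4) * thetaSeries (q ^ 12) (-q ^ 4))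
        + q ^ 4 * (thetaSeries (q ^ 4) (-q ^ 6) * thetaSeries (q ^ 12) (-q ^ 10))
        + q ^ 9 * (thetaSeries (q ^ 4) (-q ^ 8) * thetaSeries (q ^ 12) (-q ^ 16)) := by
  have h_neg : -q ^ 2 ≠ 0 := neg_ne_zero.mpr (pow_ne_zero 2 hq0)
  have h_mul (n : ℕ) : -q ^ 2 * q ^ n = -q ^ (2 + n) := by rw [pow_add, neg_mul]
  have h_inv_mul (n : ℕ) : (-q ^ 2)⁻¹ * q ^ (2 + n) = -q ^ n := by
    rw [pow_add, inv_neg, neg_mul, inv_mul_cancel_left₀ (pow_ne_zero 2 hq0)]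
  have h_schroter :=
    thetaSeries_mul_thetaSeries hq hq0 one_ne_zero three_ne_zero one_ne_zero h_neg
  simpa only [sum_range_succ, sum_range_zero, one_pow, one_mul, mul_one, mul_zero, zero_add,
    pow_one, pow_zero, Nat.reduceAdd, Nat.reduceMul, Nat.reducePow, one_div, h_mul,
    h_inv_mul 4, h_inv_mul 10, h_inv_mul 16, ne_eq, OfNat.ofNat_ne_zero, not_false_eq_true,
    zero_pow] using h_schroter

lemma thetaSeries_one_mul_thetaSeries_cube (hq : ‖q‖ < 1) (hq0 : q ≠ 0) :
    thetaSeries q 1 * thetaSeries (q ^ 3) (-q ^ 2) =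
      Jam q 2 8 * Jam q 10 24 + q * (Jam q 4 8 * Jam q 4 24)
        - q ^ 2 * (Jam q 2 8 * Jam q 2 24) := by
  have hθ {a b : ℕ} (ha : a ≠ 0) (hab : b ≤ a) := thetaSeries_pow_neg_pow hq hq0 ha hab
  have h_four_zero : thetaSeries (q ^ 4) (-q ^ 0) = Jam q 4 8 := hθ (by lia) (by lia)
  have h_four_two : thetaSeries (q ^ 4) (-q ^ 2) = Jam q 2 8 := hθ (by lia) (by lia)
  have h_four_four : thetaSeries (q ^ 4) (-q ^ 4) = 0 := thetaSeries_neg_self (pow_ne_zero 4 hq0)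
  have h_four_six := pow_mul_thetaSeries_neg_pow hq0 (show 6 + 2 = 2 * 4 from rfl)
  have h_four_eight := pow_mul_thetaSeries_neg_pow hq0 (show 8 + 0 = 2 * 4 from rfl)
  have h_twelve_two : thetaSeries (q ^ 12) (-q ^ 2) = Jam q 10 24 := hθ (by lia) (by lia)
  have h_twelve_ten : thetaSeries (q ^ 12) (-q ^ 10) = Jam q 2 24 := hθ (by lia) (by lia)
  have h_twelve_eight : thetaSeries (q ^ 12) (-q ^ 8) = Jam q 4 24 := hθ (by lia) (by lia)
  have h_twelve_sixteen := pow_mul_thetaSeries_neg_pow hq0 (show 16 + 8 = 2 * 12 from rfl)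
  rw [h_four_two] at h_four_six
  rw [h_four_zero] at h_four_eight
  rw [h_twelve_eight] at h_twelve_sixteen
  have h_third : q ^ 9 * (thetaSeries (q ^ 4) (-q ^ 8) * thetaSeries (q ^ 12) (-q ^ 16)) =
      q * (Jam q 4 8 * Jam q 4 24) := by
    refine mul_left_cancel₀ (pow_ne_zero 7 hq0) ?_
    linear_combination q ^ 12 * thetaSeries (q ^ 12) (-q ^ 16) * h_four_eight
      - Jam q 4 8 * h_twelve_sixteen
  rw [thetaSeries_one_mul_thetaSeries_cube_eq_sum hq hq0, thetaSeries_inv, h_four_four,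
    h_four_two, h_twelve_two, h_twelve_ten, h_third]
  linear_combination Jam q 2 24 * h_four_six

end ThetaSeries

section BaileyLemma

variable {p : ℂ}

/-- The multiplier `(ρ; p)_k p^(k choose 2) (-b)^k` of the limiting case of Bailey's lemma in
which the second parameter tends to infinity. -/
noncomputable def baileyMultiplier (p ρ b : ℂ) (k : ℕ) : ℂ :=
  qPoch ρ p k * p ^ k.choose 2 * (-b) ^ k

lemma baileyMultiplier_add (p ρ b : ℂ) (r j : ℕ) :
    baileyMultiplier p ρ b (r + j) =
      baileyMultiplier p ρ b r * baileyMultiplier p (ρ * p ^ r) (b * p ^ r) j := by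
  simp only [baileyMultiplier, qPoch_add, choose_two_add, pow_add, ← neg_mul, mul_pow, pow_mul]
  ring

lemma phiOneOneTerm_mul_self (p ρ b : ℂ) (j : ℕ) :
    phiOneOneTerm p b (ρ * b) j =
      baileyMultiplier p ρ b j * qPochInf (ρ * b * p ^ j) p / qPoch p p j := by
  have h_prod : ∏ k ∈ range j, (ρ * b * p ^ k - b) = qPoch ρ p j * (-b) ^ j := by
    rw [← card_range j, ← prod_const, card_range, qPoch, ← prod_mul_distrib]
    exact prod_congr rfl fun k _ => by ring
  rw [phiOneOneTerm, h_prod, baileyMultiplier]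
  ring

lemma baileyMultiplier_add_div (hp : ‖p‖ < 1) {ρ b : ℂ} (hρb : qPochInf (ρ * b) p ≠ 0)
    (r j : ℕ) :
    baileyMultiplier p ρ b (r + j) / (qPoch p p j * qPoch (ρ * b) p (r + j + r)) =
      baileyMultiplier p ρ b r * phiOneOneTerm p (b * p ^ r) (ρ * p ^ r * (b * p ^ r)) j /
        qPochInf (ρ * b) p := by
  have h_arg : ρ * p ^ r * (b * p ^ r) * p ^ j = ρ * b * p ^ (r + j + r) := by ring
  have h_split := qPochInf_eq_qPoch_mul hp (ρ * b) (r + j + r)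
  rw [h_split] at hρb
  have h_fin := left_ne_zero_of_mul hρb
  have h_inf := right_ne_zero_of_mul hρb
  rw [phiOneOneTerm_mul_self, h_arg, h_split, baileyMultiplier_add]
  field_simp

lemma summable_baileyMultiplier_mul (hp : ‖p‖ < 1) {ρ b : ℂ} {α : ℕ → ℂ}
    (h : Summable fun r => baileyMultiplier p ρ b r * α r * qPochInf (b * p ^ r) p) :
    Summable fun r => baileyMultiplier p ρ b r * α r := by
  have h_lim := tendsto_qPochInf_one hp (tendsto_mul_pow_zero hp b)
  refine summable_of_isBigO_nat' h (((Asymptotics.isBigO_refl _ _).mul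
    ((h_lim.inv₀ one_ne_zero).isBigO_one ℂ)).congr' ?_ (.of_forall fun _ => mul_one _))
  filter_upwards [h_lim.eventually_ne one_ne_zero] with r hr
  exact mul_inv_cancel_right₀ hr _

lemma summable_mul_phiOneOneTerm {ι : Type*} (hp : ‖p‖ < 1) {w b c : ι → ℂ} {B C : ℝ}
    (hb : ∀ i, ‖b i‖ ≤ B) (hc : ∀ i, ‖c i‖ ≤ C) (hw : Summable w) :
    Summable fun x : ι × ℕ => w x.1 * phiOneOneTerm p (b x.1) (c x.1) x.2 := by
  obtain ⟨M, hM⟩ := exists_norm_phiOneOneTerm_le hp B C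
  have h_geom := (summable_pow_choose_two_mul_pow (norm_nonneg p) hp (C + B)).mul_left M
  refine .of_norm_bounded (summable_mul_of_summable_norm hw.norm.norm h_geom.norm) fun x => ?_
  rw [norm_mul]
  exact mul_le_mul_of_nonneg_left (hM _ _ (hb x.1) (hc x.1) x.2) (norm_nonneg _)

lemma hasSum_bailey_double (hp : ‖p‖ < 1) {ρ b : ℂ} {α : ℕ → ℂ} {s : ℂ}
    (hα : HasSum (fun r => baileyMultiplier p ρ b r * α r * qPochInf (b * p ^ r) p) s) :
    HasSum (fun x : ℕ × ℕ => baileyMultiplier p ρ b x.1 * α x.1 *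
      phiOneOneTerm p (b * p ^ x.1) (ρ * p ^ x.1 * (b * p ^ x.1)) x.2) s := by
  have hc (r : ℕ) : ‖ρ * p ^ r * (b * p ^ r)‖ ≤ ‖ρ‖ * ‖b‖ := by
    rw [norm_mul]
    gcongr <;> exact norm_mul_pow_le hp _ r
  have h_summable := summable_mul_phiOneOneTerm hp (norm_mul_pow_le hp b) hc
    (summable_baileyMultiplier_mul hp hα.summable)
  have h_fiber (r : ℕ) := (hasSum_phiOneOneTerm hp (b * p ^ r)
    (ρ * p ^ r * (b * p ^ r))).mul_left (baileyMultiplier p ρ b r * α r)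
  rw [hα.unique (h_summable.hasSum.prod_fiberwise h_fiber)]
  exact h_summable.hasSum

lemma hasSum_sum_range_of_prod {M : Type*} [AddCommMonoid M] [TopologicalSpace M]
    [ContinuousAdd M] [RegularSpace M] {u : ℕ × ℕ → M} {s : M} (h : HasSum u s) :
    HasSum (fun k => ∑ r ∈ range (k + 1), u (r, k - r)) s := by
  rw [← Finset.HasAntidiagonal.sigmaAntidiagonalEquivProd.hasSum_iff] at h
  have h_diag (k : ℕ) : HasSum (fun x : antidiagonal k => u x)
      (∑ r ∈ range (k + 1), u (r, k - r)) := by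
    rw [← Nat.sum_antidiagonal_eq_sum_range_succ_mk u k, ← sum_coe_sort (antidiagonal k) u]
    exact hasSum_fintype _
  exact h.sigma h_diag

theorem hasSum_bailey (hp : ‖p‖ < 1) {ρ b : ℂ} (hρb : qPochInf (ρ * b) p ≠ 0) {α : ℕ → ℂ}
    {s : ℂ} (hα : HasSum (fun r => baileyMultiplier p ρ b r * α r * qPochInf (b * p ^ r) p) s) :
    HasSum (fun k => baileyMultiplier p ρ b k *
      ∑ r ∈ range (k + 1), α r / (qPoch p p (k - r) * qPoch (ρ * b) p (k + r)))
      (s / qPochInf (ρ * b) p) := by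
  have h_term (k : ℕ) : baileyMultiplier p ρ b k *
      ∑ r ∈ range (k + 1), α r / (qPoch p p (k - r) * qPoch (ρ * b) p (k + r)) =
      (∑ r ∈ range (k + 1), baileyMultiplier p ρ b r * α r *
        phiOneOneTerm p (b * p ^ r) (ρ * p ^ r * (b * p ^ r)) (k - r)) / qPochInf (ρ * b) p := by
    rw [mul_sum, sum_div]
    refine sum_congr rfl fun r hr => ?_
    have hrk : r + (k - r) = k := Nat.add_sub_of_le (mem_range_succ_iff.mp hr)
    have h := baileyMultiplier_add_div hp hρb r (k - r)
    rw [hrk] at h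
    linear_combination α r * h
  simp only [h_term]
  exact (hasSum_sum_range_of_prod (hasSum_bailey_double hp hα)).div_const (qPochInf (ρ * b) p)

end BaileyLemma

section BaileyPair

variable {p : ℂ}

/-- The `α`-sequence, scaled by `1 - p`, of Slater's Bailey pair E(3) relative to `p`, whose
`β`-sequence is `1 / (p²; p²)_k`. -/
def slaterAlpha (p : ℂ) (r : ℕ) : ℂ := (-1) ^ r * p ^ r ^ 2 * (1 - p ^ (2 * r + 1))

/-- The certificate that telescopes the recurrence in `k` satisfied by the sums
`∑ r ≤ k, slaterAlpha p r / ((p; p)_(k - r) (p; p)_(k + r + 1))`. -/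
noncomputable def slaterCertificate (p : ℂ) (k r : ℕ) : ℂ :=
  (-1) ^ r * p ^ r ^ 2 * p ^ (k + 1 - r) * (1 - p ^ (2 * r)) /
    (qPoch p p (k + 1 - r) * qPoch p p (k + 1 + r))

lemma slaterAlpha_div_sub_eq (hp : ‖p‖ < 1) {k r : ℕ} (hr : r ≤ k) :
    (1 - p ^ (2 * (k + 1))) *
        (slaterAlpha p r / (qPoch p p (k + 1 - r) * qPoch p p (k + 1 + r + 1)))
      - slaterAlpha p r / (qPoch p p (k - r) * qPoch p p (k + r + 1)) =
    slaterCertificate p k r - slaterCertificate p k (r + 1) := by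
  obtain ⟨d, rfl⟩ := Nat.exists_eq_add_of_le hr
  have h₁ := qPoch_ne_zero hp hp (d + 1)
  have h₂ := qPoch_ne_zero hp hp (2 * r + d + 1 + 1)
  rw [qPoch_succ] at h₁ h₂
  have := right_ne_zero_of_mul h₁
  have := left_ne_zero_of_mul h₁
  have := right_ne_zero_of_mul h₂
  have := left_ne_zero_of_mul h₂
  have h_sub : r + d - r = d := by lia
  have h_succ_sub : r + d + 1 - r = d + 1 := by lia
  have h_succ_sub_succ : r + d + 1 - (r + 1) = d := by lia
  have h_add : r + d + r + 1 = 2 * r + d + 1 := by ring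
  have h_succ_add : r + d + 1 + r = 2 * r + d + 1 := by ring
  have h_succ_add_succ : r + d + 1 + (r + 1) = 2 * r + d + 1 + 1 := by ring
  simp only [slaterAlpha, slaterCertificate, h_sub, h_succ_sub, h_succ_sub_succ, h_add,
    h_succ_add, h_succ_add_succ]
  rw [qPoch_succ p p d, qPoch_succ p p (2 * r + d + 1)]
  generalize qPoch p p d = X at *
  generalize qPoch p p (2 * r + d + 1) = Y at *
  field_simp
  ring

lemma slaterAlpha_div_succ_self (hp : ‖p‖ < 1) (k : ℕ) :
    (1 - p ^ (2 * (k + 1))) * (slaterAlpha p (k + 1) / qPoch p p (k + 1 + (k + 1) + 1)) =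
      slaterCertificate p k (k + 1) := by
  have h := qPoch_ne_zero hp hp (k + 1 + (k + 1) + 1)
  rw [qPoch_succ, ← pow_succ'] at h
  have := right_ne_zero_of_mul h
  have := left_ne_zero_of_mul h
  rw [slaterAlpha, slaterCertificate, Nat.sub_self, pow_zero, qPoch_zero, qPoch_succ, ← pow_succ',
    two_mul]
  field_simp

theorem sum_slaterAlpha_div (hp : ‖p‖ < 1) (k : ℕ) :
    ∑ r ∈ range (k + 1), slaterAlpha p r / (qPoch p p (k - r) * qPoch p p (k + r + 1)) =
      (qPoch (p ^ 2) (p ^ 2) k)⁻¹ := by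
  induction k with
  | zero =>
    have h : 1 - p ≠ 0 := by simpa [qPoch] using qPoch_ne_zero hp hp 1
    simp [slaterAlpha, qPoch, h]
  | succ k ih =>
    have h_tele : ∑ r ∈ range (k + 1), ((1 - p ^ (2 * (k + 1))) *
        (slaterAlpha p r / (qPoch p p (k + 1 - r) * qPoch p p (k + 1 + r + 1)))
          - slaterAlpha p r / (qPoch p p (k - r) * qPoch p p (k + r + 1))) =
        -slaterCertificate p k (k + 1) := by
      rw [sum_congr rfl fun r hr => slaterAlpha_div_sub_eq hp (mem_range_succ_iff.mp hr),
        sum_range_sub']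
      simp [slaterCertificate]
    have h_factor : 1 - p ^ (2 * (k + 1)) ≠ 0 := by
      have := one_sub_mul_pow_ne_zero (norm_pow_lt_one hp two_ne_zero)
        (norm_pow_lt_one hp two_ne_zero) k
      rwa [← pow_succ', ← pow_mul] at this
    rw [sum_sub_distrib, ← mul_sum, ih] at h_tele
    rw [sum_range_succ, Nat.sub_self, qPoch_zero, one_mul, qPoch_succ (p ^ 2), ← pow_succ',
      ← pow_mul, mul_inv, eq_mul_inv_iff_mul_eq₀ h_factor]
    linear_combination h_tele + slaterAlpha_div_succ_self hp k

end BaileyPair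

section SlaterSeries

variable {q : ℂ}

lemma hasSum_thetaSeries_cube_nat (hq : ‖q‖ < 1) (hq0 : q ≠ 0) :
    HasSum (fun r : ℕ => (-1) ^ r * q ^ (3 * r ^ 2 + 2 * r) * (1 - q ^ (2 * r + 1)))
      (thetaSeries (q ^ 3) (-q ^ 2)) := by
  have h_neg : -q ^ 2 ≠ 0 := neg_ne_zero.mpr (pow_ne_zero 2 hq0)
  have h := (hasSum_thetaSeries (norm_pow_lt_one hq three_ne_zero) (pow_ne_zero 3 hq0)
    h_neg).nat_add_neg_add_one
  have h_term (r : ℕ) :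
      (-1) ^ r * q ^ (3 * r ^ 2 + 2 * r) * (1 - q ^ (2 * r + 1)) =
        (q ^ 3) ^ (r : ℤ) ^ 2 * (-q ^ 2) ^ (r : ℤ)
          + (q ^ 3) ^ (-((r : ℤ) + 1)) ^ 2 * (-q ^ 2) ^ (-((r : ℤ) + 1)) := by
    have h_sq : (-((r : ℤ) + 1)) ^ 2 = ((r + 1) ^ 2 : ℕ) := by push_cast; ring
    have h_succ : ((r : ℤ) + 1) = (r + 1 : ℕ) := by push_cast; rfl
    have h_sign : ((-1 : ℂ) ^ r) ^ 2 = 1 := by rw [pow_right_comm, neg_one_sq, one_pow]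
    rw [h_sq, h_succ, zpow_neg, zpow_natCast, zpow_natCast, zpow_natCast, ← Nat.cast_pow,
      zpow_natCast, neg_pow (q ^ 2), neg_pow (q ^ 2), pow_succ (-1 : ℂ)]
    field_simp
    rw [h_sign]
    ring
  simp only [h_term]
  exact h

lemma baileyMultiplier_mul_slaterAlpha_mul (hq : ‖q‖ < 1) (r : ℕ) :
    baileyMultiplier (q ^ 2) (-q) (-q ^ 3) r * slaterAlpha (q ^ 2) r *
        qPochInf (-q ^ 3 * (q ^ 2) ^ r) (q ^ 2) =
      qPochInf (-q) (q ^ 2) *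
        ((-1) ^ r * q ^ (3 * r ^ 2 + 2 * r) * (1 - q ^ (2 * r + 1))) := by
  have hp := norm_pow_lt_one hq two_ne_zero
  have h_arg : -q * (q ^ 2) ^ r * q ^ 2 = -q ^ 3 * (q ^ 2) ^ r := by ring
  have h_sq := pow_sq_eq_pow_choose_two q r
  rw [qPochInf_eq_qPoch_mul hp (-q) r, qPochInf_eq_one_sub_mul hp (-q * _), h_arg, baileyMultiplier,
    slaterAlpha]
  generalize qPoch (-q) (q ^ 2) r = A
  generalize qPochInf (-q ^ 3 * (q ^ 2) ^ r) (q ^ 2) = B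
  have h_pow : q ^ (3 * r ^ 2 + 2 * r) = q ^ r ^ 2 * (q ^ 2) ^ r ^ 2 * (q ^ 2) ^ r := by ring
  rw [h_pow, h_sq]
  ring

lemma sum_slaterAlpha_sq_div (hq : ‖q‖ < 1) (k : ℕ) :
    ∑ r ∈ range (k + 1), slaterAlpha (q ^ 2) r /
        (qPoch (q ^ 2) (q ^ 2) (k - r) * qPoch (q ^ 4) (q ^ 2) (k + r)) =
      (1 - q ^ 2) / qPoch (q ^ 4) (q ^ 4) k := by
  have hp := norm_pow_lt_one hq two_ne_zero
  have h_ne : 1 - q ^ 2 ≠ 0 := by simpa using one_sub_mul_pow_ne_zero hp hp 0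
  have h := sum_slaterAlpha_div hp k
  have h_sq : q ^ 2 * q ^ 2 = q ^ 4 := by ring
  have h_sq_sq : (q ^ 2) ^ 2 = q ^ 4 := by ring
  rw [h_sq_sq] at h
  rw [div_eq_mul_inv, ← h, mul_sum]
  refine sum_congr rfl fun r _ => ?_
  rw [qPoch_succ', h_sq]
  field_simp

theorem hasSum_pow_mul_qPoch_div_qPoch (hq : ‖q‖ < 1) (hq0 : q ≠ 0) :
    HasSum (fun k : ℕ => q ^ (k ^ 2 + 2 * k) * qPoch (-q) (q ^ 2) k / qPoch (q ^ 4) (q ^ 4) k)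
      (qPochInf (-q) (q ^ 2) / qPochInf (q ^ 2) (q ^ 2) * thetaSeries (q ^ 3) (-q ^ 2)) := by
  have hp := norm_pow_lt_one hq two_ne_zero
  have h_ρb : -q * -q ^ 3 = q ^ 4 := by ring
  have h_inf := qPochInf_eq_one_sub_mul hp (q ^ 2)
  have h_inf_ne := qPochInf_ne_zero hp hp
  have h_sq : q ^ 2 * q ^ 2 = q ^ 4 := by ring
  rw [h_sq] at h_inf
  rw [h_inf] at h_inf_ne
  have h_ne := left_ne_zero_of_mul h_inf_ne
  have h_α := (hasSum_thetaSeries_cube_nat hq hq0).mul_left (qPochInf (-q) (q ^ 2))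
  simp only [← baileyMultiplier_mul_slaterAlpha_mul hq] at h_α
  have h_bailey := (hasSum_bailey hp
    (by rw [h_ρb]; exact right_ne_zero_of_mul h_inf_ne) h_α).div_const (1 - q ^ 2)
  simp only [h_ρb, sum_slaterAlpha_sq_div hq] at h_bailey
  have h_value : qPochInf (-q) (q ^ 2) / qPochInf (q ^ 2) (q ^ 2) * thetaSeries (q ^ 3) (-q ^ 2) =
      qPochInf (-q) (q ^ 2) * thetaSeries (q ^ 3) (-q ^ 2) / qPochInf (q ^ 4) (q ^ 2) /
        (1 - q ^ 2) := by
    rw [h_inf]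
    field_simp
  have h_term (k : ℕ) :
      q ^ (k ^ 2 + 2 * k) * qPoch (-q) (q ^ 2) k / qPoch (q ^ 4) (q ^ 4) k =
        baileyMultiplier (q ^ 2) (-q) (-q ^ 3) k * ((1 - q ^ 2) / qPoch (q ^ 4) (q ^ 4) k) /
          (1 - q ^ 2) := by
    rw [baileyMultiplier, pow_add, pow_sq_eq_pow_choose_two]
    field_simp
    ring
  simp only [h_term]
  rw [h_value]
  exact h_bailey

end SlaterSeries

section QuadrupleSeries

variable {q : ℂ}

/-- The exponent of `q` in the summand of the quadruple series. -/
def quadExponent (i j k l : ℕ) : ℤ :=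
  2 * (i : ℤ) ^ 2 + 2 * (j : ℤ) ^ 2 + 2 * (k : ℤ) ^ 2 + 2 * (l : ℤ) ^ 2 - 2 * (i : ℤ) * (l : ℤ)
    - 2 * (j : ℤ) * (l : ℤ) - 2 * (k : ℤ) * (l : ℤ) + 2 * (i : ℤ) - 2 * (j : ℤ) + (l : ℤ)

lemma add_le_quadExponent (i j k l : ℕ) :
    (-3 : ℤ) + (i + (j + (k + l))) ≤ quadExponent i j k l := by
  rw [quadExponent]
  -- These squares diagonalize the quadratic form in the exponent.
  nlinarith [sq_nonneg (4 * (i : ℤ) - 2 * l + 1), sq_nonneg (4 * (j : ℤ) - 2 * l - 3),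
    sq_nonneg (4 * (k : ℤ) - 2 * l - 1), sq_nonneg (2 * (l : ℤ) - 3)]

/-- The summand of the quadruple series. -/
noncomputable def quadTerm (q : ℂ) (i j k l : ℕ) : ℂ :=
  q ^ quadExponent i j k l /
    (qPoch (q ^ 4) (q ^ 4) i * qPoch (q ^ 4) (q ^ 4) j * qPoch (q ^ 4) (q ^ 4) k *
      qPoch (q ^ 4) (q ^ 4) l)

lemma summable_quadTerm (hq : ‖q‖ < 1) (hq0 : q ≠ 0) :
    Summable fun x : ℕ × ℕ × ℕ × ℕ => quadTerm q x.1 x.2.1 x.2.2.1 x.2.2.2 := by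
  have hp := norm_pow_lt_one hq four_ne_zero
  have hr : 0 < ‖q‖ := norm_pos_iff.mpr hq0
  obtain ⟨C, hC⟩ := exists_norm_qPoch_inv_le hp (qPochInf_ne_zero hp hp)
  have hC0 : 0 ≤ C := (norm_nonneg _).trans (hC 0)
  have h_geom : Summable fun n : ℕ => ‖q‖ ^ n := summable_geometric_of_lt_one hr.le hq
  have h_mul {ι : Type} {g : ι → ℝ} (hg : Summable g) (hg0 : 0 ≤ g) :=
    h_geom.mul_of_nonneg hg (fun n => pow_nonneg hr.le n) hg0
  have h_geom_prod := h_mul (h_mul (h_mul h_geom fun n => by positivity) fun x => by positivity)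
    fun x => by positivity
  refine .of_norm_bounded (h_geom_prod.mul_left (‖q‖ ^ (-3 : ℤ) * (C * C * C * C))) ?_
  rintro ⟨i, j, k, l⟩
  have h_pow : ‖q‖ ^ quadExponent i j k l ≤
      ‖q‖ ^ (-3 : ℤ) * (‖q‖ ^ i * (‖q‖ ^ j * (‖q‖ ^ k * ‖q‖ ^ l))) := by
    simp only [← zpow_natCast, ← zpow_add₀ hr.ne']
    exact zpow_le_zpow_right_of_le_one₀ hr hq.le (add_le_quadExponent i j k l)
  simp only [quadTerm, div_eq_mul_inv, mul_inv, norm_mul, norm_zpow]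
  calc _ ≤ ‖q‖ ^ (-3 : ℤ) * (‖q‖ ^ i * (‖q‖ ^ j * (‖q‖ ^ k * ‖q‖ ^ l))) * (C * C * C * C) := by
        gcongr <;> apply hC
    _ = _ := by ring

lemma quadTerm_eq_eulerTerm_mul (hq0 : q ≠ 0) (i j k l : ℕ) :
    quadTerm q i j k l =
      eulerTerm (q ^ 4) (q ^ 3) l * eulerTerm (q ^ 4) (q ^ 4 / (q ^ 2) ^ l) i *
        (eulerTerm (q ^ 4) (1 / (q ^ 2) ^ l) j * eulerTerm (q ^ 4) (q ^ 2 / (q ^ 2) ^ l) k) := by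
  have h_sq (n : ℕ) : (q ^ 2) ^ n ^ 2 = (q ^ 4) ^ n.choose 2 * (q ^ 2) ^ n := by
    rw [pow_sq_eq_pow_choose_two, ← pow_mul q]
  have h_zpow : q ^ quadExponent i j k l *
        (((q ^ 2) ^ l) ^ i * ((q ^ 2) ^ l) ^ j * ((q ^ 2) ^ l) ^ k * (q ^ 2) ^ j) =
      (q ^ 2) ^ i ^ 2 * (q ^ 2) ^ j ^ 2 * (q ^ 2) ^ k ^ 2 * (q ^ 2) ^ l ^ 2 * (q ^ 2) ^ i *
        q ^ l := by
    simp only [← zpow_natCast, ← zpow_mul, ← zpow_add₀ hq0]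
    congr 1
    rw [quadExponent]
    push_cast
    ring
  rw [quadTerm, eq_div_of_mul_eq (by positivity) h_zpow]
  simp only [eulerTerm, div_pow, h_sq, one_pow]
  field_simp
  ring

lemma eulerTerm_mul_qPochInf_neg_one_div_pow (hq : ‖q‖ < 1) (hq0 : q ≠ 0) (l : ℕ) :
    eulerTerm (q ^ 4) (q ^ 3) l * qPochInf (-1 / (q ^ 2) ^ l) (q ^ 2) =
      2 * qPochInf (-q ^ 2) (q ^ 2) * (q ^ l ^ 2 / qPoch (q ^ 2) (q ^ 2) l) := by
  have hp := norm_pow_lt_one hq two_ne_zero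
  have h_inf : qPochInf (-1) (q ^ 2) = 2 * qPochInf (-q ^ 2) (q ^ 2) := by
    rw [qPochInf_eq_one_sub_mul hp, neg_one_mul]
    ring
  have h_den := qPoch_sq_sq (q ^ 2) (q ^ 2) l
  have h_ne : qPoch (q ^ 4) (q ^ 4) l ≠ 0 := by
    have hp4 := norm_pow_lt_one hq four_ne_zero
    exact qPoch_ne_zero hp4 hp4 l
  rw [← pow_mul] at h_den
  rw [h_den] at h_ne
  have := left_ne_zero_of_mul h_ne
  have := right_ne_zero_of_mul h_ne
  rw [qPochInf_div_pow hp (pow_ne_zero 2 hq0) (neg_ne_zero.mpr one_ne_zero), h_inf, eulerTerm,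
    h_den, pow_sq_eq_pow_choose_two, Nat.choose_succ_succ' l 1,
    Nat.choose_one_right, neg_neg, one_pow, div_neg, div_one]
  generalize qPochInf (-q ^ 2) (q ^ 2) = C
  generalize qPoch (-q ^ 2) (q ^ 2) l = D at *
  generalize qPoch (q ^ 2) (q ^ 2) l = E at *
  field_simp
  ring

lemma hasSum_quadTerm_middle (hq : ‖q‖ < 1) (hq0 : q ≠ 0) (i l : ℕ) :
    HasSum (fun x : ℕ × ℕ => quadTerm q i x.1 x.2 l)
      (2 * qPochInf (-q ^ 2) (q ^ 2) *
        (q ^ l ^ 2 / qPoch (q ^ 2) (q ^ 2) l * eulerTerm (q ^ 4) (q ^ 4 / (q ^ 2) ^ l) i)) := by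
  have hp := norm_pow_lt_one hq two_ne_zero
  have hp4 := norm_pow_lt_one hq four_ne_zero
  have h_inner := (hasSum_mul_prod (hasSum_eulerTerm hp4 (1 / (q ^ 2) ^ l))
    (hasSum_eulerTerm hp4 (q ^ 2 / (q ^ 2) ^ l))).mul_left
      (eulerTerm (q ^ 4) (q ^ 3) l * eulerTerm (q ^ 4) (q ^ 4 / (q ^ 2) ^ l) i)
  have h_base : qPochInf (-1 / (q ^ 2) ^ l) (q ^ 2) =
      qPochInf (-(1 / (q ^ 2) ^ l)) (q ^ 4) * qPochInf (-(q ^ 2 / (q ^ 2) ^ l)) (q ^ 4) := by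
    rw [qPochInf_eq_mul_sq_base hp, ← pow_mul q 2 2, neg_div, neg_mul, div_mul_eq_mul_div, one_mul]
  have h_value : eulerTerm (q ^ 4) (q ^ 3) l * eulerTerm (q ^ 4) (q ^ 4 / (q ^ 2) ^ l) i *
      (qPochInf (-(1 / (q ^ 2) ^ l)) (q ^ 4) * qPochInf (-(q ^ 2 / (q ^ 2) ^ l)) (q ^ 4)) =
      2 * qPochInf (-q ^ 2) (q ^ 2) *
        (q ^ l ^ 2 / qPoch (q ^ 2) (q ^ 2) l * eulerTerm (q ^ 4) (q ^ 4 / (q ^ 2) ^ l) i) := by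
    rw [← h_base]
    linear_combination
      eulerTerm (q ^ 4) (q ^ 4 / (q ^ 2) ^ l) i *
        eulerTerm_mul_qPochInf_neg_one_div_pow hq hq0 l
  simp only [quadTerm_eq_eulerTerm_mul hq0]
  rw [← h_value]
  exact h_inner

lemma div_qPoch_mul_eulerTerm (q : ℂ) (i l : ℕ) :
    q ^ l ^ 2 / qPoch (q ^ 2) (q ^ 2) l * eulerTerm (q ^ 4) (q ^ 4 / (q ^ 2) ^ l) i =
      eulerTerm (q ^ 4) (q ^ 4) i * eulerTerm (q ^ 2) (q / (q ^ 2) ^ i) l := by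
  have h_comm := pow_right_comm (q ^ 2) l i
  rw [pow_sq_eq_pow_choose_two]
  simp only [eulerTerm, div_pow, h_comm]
  ring

lemma eulerTerm_mul_qPochInf_neg_div_pow (hq : ‖q‖ < 1) (hq0 : q ≠ 0) (i : ℕ) :
    eulerTerm (q ^ 4) (q ^ 4) i * qPochInf (-q / (q ^ 2) ^ i) (q ^ 2) =
      qPochInf (-q) (q ^ 2) *
        (q ^ (i ^ 2 + 2 * i) * qPoch (-q) (q ^ 2) i / qPoch (q ^ 4) (q ^ 4) i) := by
  have hp := norm_pow_lt_one hq two_ne_zero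
  rw [qPochInf_div_pow hp (pow_ne_zero 2 hq0) (neg_ne_zero.mpr hq0), eulerTerm, pow_add,
    pow_sq_eq_pow_choose_two, Nat.choose_succ_succ' i 1, Nat.choose_one_right]
  have h_arg : q ^ 2 / -q = -q := by field_simp
  rw [h_arg]
  field_simp
  ring

lemma hasSum_div_qPoch_mul_eulerTerm (hq : ‖q‖ < 1) (hq0 : q ≠ 0) (i : ℕ) :
    HasSum (fun l : ℕ =>
      q ^ l ^ 2 / qPoch (q ^ 2) (q ^ 2) l * eulerTerm (q ^ 4) (q ^ 4 / (q ^ 2) ^ l) i)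
      (qPochInf (-q) (q ^ 2) *
        (q ^ (i ^ 2 + 2 * i) * qPoch (-q) (q ^ 2) i / qPoch (q ^ 4) (q ^ 4) i)) := by
  have h := (hasSum_eulerTerm (norm_pow_lt_one hq two_ne_zero) (q / (q ^ 2) ^ i)).mul_left
    (eulerTerm (q ^ 4) (q ^ 4) i)
  rw [← neg_div, eulerTerm_mul_qPochInf_neg_div_pow hq hq0] at h
  simp only [div_qPoch_mul_eulerTerm]
  exact h

theorem tsum_quadTerm (hq : ‖q‖ < 1) (hq0 : q ≠ 0) :
    ∑' x : ℕ × ℕ × ℕ × ℕ, quadTerm q x.1 x.2.1 x.2.2.1 x.2.2.2 =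
      2 * qPochInf (-q ^ 2) (q ^ 2) * (qPochInf (-q) (q ^ 2) *
        (qPochInf (-q) (q ^ 2) / qPochInf (q ^ 2) (q ^ 2) * thetaSeries (q ^ 3) (-q ^ 2))) := by
  let e : (ℕ × ℕ) × ℕ × ℕ ≃ ℕ × ℕ × ℕ × ℕ :=
    { toFun := fun x => (x.1.1, x.2.1, x.2.2, x.1.2)
      invFun := fun x => ((x.1, x.2.2.2), x.2.1, x.2.2.1) }
  have h_sum := e.hasSum_iff.mpr (summable_quadTerm hq hq0).hasSum
  have h_outer := (h_sum.prod_fiberwise fun x =>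
    hasSum_quadTerm_middle hq hq0 x.1 x.2).prod_fiberwise fun i =>
      (hasSum_div_qPoch_mul_eulerTerm hq hq0 i).mul_left (2 * qPochInf (-q ^ 2) (q ^ 2))
  exact h_outer.unique (((hasSum_pow_mul_qPoch_div_qPoch hq hq0).mul_left _).mul_left _)

end QuadrupleSeries

section JProducts

variable {q : ℂ}

lemma J_ne_zero (hq : ‖q‖ < 1) {m : ℕ} (hm : m ≠ 0) : J q m ≠ 0 :=
  qPochInf_ne_zero (norm_pow_lt_one hq hm) (norm_pow_lt_one hq hm)

lemma qPochInf_neg_pow_mul_J (hq : ‖q‖ < 1) {m : ℕ} (hm : m ≠ 0) :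
    qPochInf (-q ^ m) (q ^ m) * J q m = J q (2 * m) := by
  have h := qPochInf_sq_sq (norm_pow_lt_one hq hm) (q ^ m)
  rw [← pow_mul, mul_comm m 2] at h
  rw [J, J, h, mul_comm]

lemma qPochInf_pow_mul_J (hq : ‖q‖ < 1) {m : ℕ} (hm : m ≠ 0) :
    qPochInf (q ^ m) (q ^ (2 * m)) * J q (2 * m) = J q m := by
  have h := qPochInf_eq_mul_sq_base (norm_pow_lt_one hq hm) (q ^ m)
  rw [← pow_add, ← two_mul, ← pow_mul, mul_comm m 2] at h
  exact h.symm

lemma Jam_two_mul_mul_J (hq : ‖q‖ < 1) {m : ℕ} (hm : m ≠ 0) :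
    Jam q m (2 * m) * J q (2 * m) = J q m ^ 2 := by
  have h_sub : 2 * m - m = m := by lia
  rw [Jam, h_sub, ← qPochInf_pow_mul_J hq hm, J]
  ring

lemma Jam_four_mul_mul_J (hq : ‖q‖ < 1) {m : ℕ} (hm : m ≠ 0) :
    Jam q m (4 * m) * J q (2 * m) = J q m * J q (4 * m) := by
  have h_sub : 4 * m - m = m + 2 * m := by lia
  have h_base : 2 * m * 2 = 4 * m := by lia
  have h := qPochInf_eq_mul_sq_base (norm_pow_lt_one hq (mul_ne_zero two_ne_zero hm)) (q ^ m)
  rw [← pow_add, ← pow_mul, h_base] at h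
  rw [Jam, h_sub, ← h, ← qPochInf_pow_mul_J hq hm, J, J]
  ring

end JProducts

lemma tsum_quadTerm_eq_thetaSeries_mul {q : ℂ} (hq : ‖q‖ < 1) (hq0 : q ≠ 0) :
    ∑' x : ℕ × ℕ × ℕ × ℕ, quadTerm q x.1 x.2.1 x.2.2.1 x.2.2.2 =
      2 * J q 4 / J q 2 ^ 3 * (thetaSeries q 1 * thetaSeries (q ^ 3) (-q ^ 2)) := by
  have h_theta := thetaSeries_eq_qPochInf_mul hq hq0 one_ne_zero
  rw [one_mul, div_one, ← J] at h_theta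
  have h_J := J_ne_zero hq two_ne_zero
  rw [tsum_quadTerm hq hq0, ← qPochInf_neg_pow_mul_J hq two_ne_zero, h_theta, ← J]
  field_simp

theorem stmt_2 (q : ℂ) (h0 : 0 < ‖q‖) (h1 : ‖q‖ < 1) :
    (∑' p : ℕ × ℕ × ℕ × ℕ,
      (fun (i j k l : ℕ) =>
        q ^ ((2*(i:ℤ)^2 + 2*(j:ℤ)^2 + 2*(k:ℤ)^2 + 2*(l:ℤ)^2 - 2*(i:ℤ)*(l:ℤ) - 2*(j:ℤ)*(l:ℤ) - 2*(k:ℤ)*(l:ℤ) + 2*(i:ℤ) - 2*(j:ℤ) + (l:ℤ)) : ℤ) /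
          (qPoch (q ^ 4) (q ^ 4) i * qPoch (q ^ 4) (q ^ 4) j * qPoch (q ^ 4) (q ^ 4) k * qPoch (q ^ 4) (q ^ 4) l))
        p.1 p.2.1 p.2.2.1 p.2.2.2)
    = 2 * J q 8 * Jam q 10 24 / (J q 2)^2
      + 2 * q * (J q 4)^3 * Jam q 4 24 / ((J q 2)^3 * J q 8)
      - 2 * q^2 * J q 8 * Jam q 2 24 / (J q 2)^2 := by
  have hq0 : q ≠ 0 := norm_pos_iff.mp h0
  have h_sum := tsum_quadTerm_eq_thetaSeries_mul h1 hq0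
  have h_two := J_ne_zero h1 two_ne_zero
  have h_four := J_ne_zero h1 four_ne_zero
  have h_eight : J q 8 ≠ 0 := J_ne_zero h1 (by norm_num)
  have h_Jam_two : Jam q 2 8 = J q 2 * J q 8 / J q 4 :=
    eq_div_of_mul_eq h_four (Jam_four_mul_mul_J h1 two_ne_zero)
  have h_Jam_four : Jam q 4 8 = J q 4 ^ 2 / J q 8 :=
    eq_div_of_mul_eq h_eight (Jam_two_mul_mul_J h1 four_ne_zero)
  rw [thetaSeries_one_mul_thetaSeries_cube h1 hq0, h_Jam_two, h_Jam_four] at h_sum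
  refine h_sum.trans ?_
  field_simp
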